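/- arXiv:2409.03594 — 5 statements merged into one kernel-verified Lean document; each statement's English description precedes it below -/
import Mathlib

section
/- For every mixed instance on a simple graph, an EFX^+_0 allocation always exists. -/
open Finset

variable {V : Type*} [DecidableEq V]

/-- `e` has strictly positive marginal value (is a *good*) for the valuation `v`
relative to the item set `M`. -/
def IsGoodFor (v : Finset (Sym2 V) → ℝ) (M : Finset (Sym2 V)) (e : Sym2 V) : Prop :=
  ∀ S ⊆ M.erase e, v S < v (insert e S)

/-- `e` has strictly negative marginal value (is a *chore*) for the valuation `v`
relative to the item set `M`. -/
def IsChoreFor (v : Finset (Sym2 V) → ℝ) (M : Finset (Sym2 V)) (e : Sym2 V) : Prop :=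
  ∀ S ⊆ M.erase e, v (insert e S) < v S

/-- `e` has zero marginal value (is a *dummy*) for the valuation `v`
relative to the item set `M`. -/
def IsDummyFor (v : Finset (Sym2 V) → ℝ) (M : Finset (Sym2 V)) (e : Sym2 V) : Prop :=
  ∀ S ⊆ M.erase e, v (insert e S) = v S

/-- A valid instance on a simple graph: the edge set `M` consists of non-loop edges,
every edge is (for every agent) a good, a chore, or a dummy, and every edge not
incident to an agent is a dummy for that agent. -/
def ValidInstance (M : Finset (Sym2 V)) (v : V → Finset (Sym2 V) → ℝ) : Prop :=
  (∀ e ∈ M, ¬ e.IsDiag) ∧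
  (∀ (i : V), ∀ e ∈ M, IsGoodFor (v i) M e ∨ IsChoreFor (v i) M e ∨ IsDummyFor (v i) M e) ∧
  (∀ (i : V), ∀ e ∈ M, i ∉ e → IsDummyFor (v i) M e)

/-- `X` is a (complete) allocation of the items in `M`: bundles are contained in `M`
and every item belongs to exactly one bundle. -/
def IsAllocation (M : Finset (Sym2 V)) (X : V → Finset (Sym2 V)) : Prop :=
  (∀ i, X i ⊆ M) ∧ ∀ e ∈ M, ∃! i, e ∈ X i

/-- Every allocated edge goes to one of its endpoint agents. -/
def IsOrientation (X : V → Finset (Sym2 V)) : Prop :=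
  ∀ i, ∀ e ∈ X i, i ∈ e

/-- Agent `i` envies agent `j`. -/
def Envies (v : V → Finset (Sym2 V) → ℝ) (X : V → Finset (Sym2 V)) (i j : V) : Prop :=
  v i (X i) < v i (X j)

/-- EFX condition on the envied bundle, removing an item whose removal *strictly*
decreases the value (superscript `+`). -/
def CondEnviedStrict (v : V → Finset (Sym2 V) → ℝ) (X : V → Finset (Sym2 V)) : Prop :=
  ∀ i j, Envies v X i j → ∀ e ∈ X j,
    v i ((X j).erase e) < v i (X j) → v i ((X j).erase e) ≤ v i (X i)

/-- EFX condition on the envied bundle, removing an item whose removal weakly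
decreases the value (superscript `0`). -/
def CondEnviedWeak (v : V → Finset (Sym2 V) → ℝ) (X : V → Finset (Sym2 V)) : Prop :=
  ∀ i j, Envies v X i j → ∀ e ∈ X j,
    v i ((X j).erase e) ≤ v i (X j) → v i ((X j).erase e) ≤ v i (X i)

/-- EFX condition on the envious agent's own bundle, removing an item whose removal
*strictly* increases the value (subscript `-`). -/
def CondOwnStrict (v : V → Finset (Sym2 V) → ℝ) (X : V → Finset (Sym2 V)) : Prop :=
  ∀ i j, Envies v X i j → ∀ e ∈ X i,
    v i (X i) < v i ((X i).erase e) → v i (X j) ≤ v i ((X i).erase e)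

/-- EFX condition on the envious agent's own bundle, removing an item whose removal
weakly increases the value (subscript `0`). -/
def CondOwnWeak (v : V → Finset (Sym2 V) → ℝ) (X : V → Finset (Sym2 V)) : Prop :=
  ∀ i j, Envies v X i j → ∀ e ∈ X i,
    v i (X i) ≤ v i ((X i).erase e) → v i (X j) ≤ v i ((X i).erase e)

/-!
Fix for every agent a favorite item, the best single good (if it has one). If `S` is a set of agents
with pairwise different favorites and every item that nobody wants is a dummy for some agent of `S`,
then give each agent of `S` its favorite, every other wanted item to an agent for whom it is a good,
and every unwanted item to an agent of `S` for whom it is a dummy. In this allocation the agents of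
`S` envy nobody, and all others hold only goods. Since the graph is simple, a bundle contains at
most one good of any other agent, so this is enough.

If no such `S` exists, then every set of agents with pairwise different favorites lies inside an
unwanted edge, so it has at most two elements. If all favorites are different, the graph has at most
one edge. Otherwise two agents `a`, `b` share the favorite `s(a, b)`, and all the others have the
same favorite as some third agent `c`. Then `s(a, c)` is unwanted and goes to `b`, for whom it is a
dummy, the star of `b` goes to `b` or to `a`, depending on whether `b` likes it, and everything else
goes to `c`; again every agent envies nobody or holds nothing.
-/

section InsertInduction

variable {α β : Type*} [DecidableEq α] [Preorder β]

theorem map_le_map_of_forall_insert_le {f : Finset α → β} {T U : Finset α} (hTU : T ⊆ U)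
    (h : ∀ e ∈ U, e ∉ T → ∀ S ⊆ U.erase e, f (insert e S) ≤ f S) : f U ≤ f T := by
  induction U using Finset.strongInduction with
  | H U ih =>
    obtain rfl | hssub := hTU.eq_or_ssubset
    · rfl
    obtain ⟨e, heU, heT⟩ := exists_of_ssubset hssub
    calc
      f U = f (insert e (U.erase e)) := by rw [insert_erase heU]
      _ ≤ f (U.erase e) := h e heU heT _ Subset.rfl
      _ ≤ f T := ih _ (erase_ssubset heU) (subset_erase.2 ⟨hTU, heT⟩) fun x hx hxT S hS ↦
        h x (mem_of_mem_erase hx) hxT S (hS.trans (erase_subset_erase _ (erase_subset _ _)))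

end InsertInduction

section SingleValuation

variable {v : Finset (Sym2 V) → ℝ} {M T U : Finset (Sym2 V)} {e : Sym2 V}

theorem IsGoodFor.not_isChoreFor (h : IsGoodFor v M e) : ¬ IsChoreFor v M e :=
  fun h' ↦ lt_asymm (h ∅ (empty_subset _)) (h' ∅ (empty_subset _))

theorem IsDummyFor.not_isGoodFor (h : IsDummyFor v M e) : ¬ IsGoodFor v M e :=
  fun h' ↦ (h' ∅ (empty_subset _)).ne' (h ∅ (empty_subset _))

theorem IsDummyFor.not_isChoreFor (h : IsDummyFor v M e) : ¬ IsChoreFor v M e :=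
  fun h' ↦ (h' ∅ (empty_subset _)).ne (h ∅ (empty_subset _))

theorem IsGoodFor.erase_lt (h : IsGoodFor v M e) (hUM : U ⊆ M) (he : e ∈ U) :
    v (U.erase e) < v U := by
  simpa only [insert_erase he] using h _ (erase_subset_erase e hUM)

/-- A mixed valuation on `M`: every item of `M` is a good, a chore or a dummy. -/
def IsMixedValuation (v : Finset (Sym2 V) → ℝ) (M : Finset (Sym2 V)) : Prop :=
  ∀ e ∈ M, IsGoodFor v M e ∨ IsChoreFor v M e ∨ IsDummyFor v M e

namespace IsMixedValuation

theorem le_of_forall_not_isGoodFor (hv : IsMixedValuation v M) (hTU : T ⊆ U) (hUM : U ⊆ M)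
    (h : ∀ e ∈ U, e ∉ T → ¬ IsGoodFor v M e) : v U ≤ v T := by
  refine map_le_map_of_forall_insert_le hTU fun e heU heT S hS ↦ ?_
  have hSM := hS.trans (erase_subset_erase e hUM)
  rcases hv e (hUM heU) with hgood | hchore | hdummy
  · exact absurd hgood (h e heU heT)
  · exact (hchore S hSM).le
  · exact (hdummy S hSM).le

theorem le_of_forall_not_isChoreFor (hv : IsMixedValuation v M) (hTU : T ⊆ U) (hUM : U ⊆ M)
    (h : ∀ e ∈ U, e ∉ T → ¬ IsChoreFor v M e) : v T ≤ v U := by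
  refine map_le_map_of_forall_insert_le (β := ℝᵒᵈ) hTU fun e heU heT S hS ↦ ?_
  have hSM := hS.trans (erase_subset_erase e hUM)
  rcases hv e (hUM heU) with hgood | hchore | hdummy
  · exact (hgood S hSM).le
  · exact absurd hchore (h e heU heT)
  · exact (hdummy S hSM).ge

theorem le_empty (hv : IsMixedValuation v M) (hUM : U ⊆ M) (h : ∀ e ∈ U, ¬ IsGoodFor v M e) :
    v U ≤ v ∅ :=
  hv.le_of_forall_not_isGoodFor (empty_subset U) hUM fun e he _ ↦ h e he

theorem empty_le (hv : IsMixedValuation v M) (hUM : U ⊆ M) (h : ∀ e ∈ U, ¬ IsChoreFor v M e) :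
    v ∅ ≤ v U :=
  hv.le_of_forall_not_isChoreFor (empty_subset U) hUM fun e he _ ↦ h e he

theorem isGoodFor_of_erase_lt (hv : IsMixedValuation v M) (hUM : U ⊆ M)
    (h : v (U.erase e) < v U) : IsGoodFor v M e := by
  by_contra hgood
  refine h.not_ge (hv.le_of_forall_not_isGoodFor (erase_subset e U) hUM fun x hx hxe ↦ ?_)
  have hxe : x = e := by simpa only [mem_erase, hx, and_true, not_not] using hxe
  rwa [hxe]

end IsMixedValuation

end SingleValuation

variable {M : Finset (Sym2 V)} {v : V → Finset (Sym2 V) → ℝ} {σ : Sym2 V → V}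
  {a b c i j : V} {e e' : Sym2 V}

namespace ValidInstance

theorem isMixedValuation (hv : ValidInstance M v) (i : V) : IsMixedValuation (v i) M :=
  hv.2.1 i

theorem ne_of_mk_mem (hv : ValidInstance M v) (h : s(i, j) ∈ M) : i ≠ j :=
  fun hij ↦ hv.1 _ h (Sym2.mk_isDiag_iff.2 hij)

theorem mem_of_isGoodFor (hv : ValidInstance M v) (he : e ∈ M) (h : IsGoodFor (v i) M e) :
    i ∈ e := by
  by_contra hi
  exact (hv.2.2 i e he hi).not_isGoodFor h

theorem not_isChoreFor_of_notMem (hv : ValidInstance M v) (he : e ∈ M) (hi : i ∉ e) :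
    ¬ IsChoreFor (v i) M e :=
  (hv.2.2 i e he hi).not_isChoreFor

end ValidInstance

/-- The instance `(M, v)` has an EFX⁺₀ allocation. -/
def AdmitsEFX (M : Finset (Sym2 V)) (v : V → Finset (Sym2 V) → ℝ) : Prop :=
  ∃ X : V → Finset (Sym2 V), IsAllocation M X ∧ CondEnviedStrict v X ∧ CondOwnWeak v X

/-- The allocation that gives each item `e` to the agent `σ e`. -/
def bundle (M : Finset (Sym2 V)) (σ : Sym2 V → V) (i : V) : Finset (Sym2 V) :=
  {e ∈ M | σ e = i}

theorem mem_bundle : e ∈ bundle M σ i ↔ e ∈ M ∧ σ e = i :=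
  mem_filter

theorem bundle_subset (M : Finset (Sym2 V)) (σ : Sym2 V → V) (i : V) : bundle M σ i ⊆ M :=
  filter_subset _ _

theorem isAllocation_bundle (M : Finset (Sym2 V)) (σ : Sym2 V → V) :
    IsAllocation M (bundle M σ) :=
  ⟨bundle_subset M σ, fun e he ↦ ⟨σ e, mem_bundle.2 ⟨he, rfl⟩, fun _ hj ↦ (mem_bundle.1 hj).2.symm⟩⟩

theorem Envies.ne {V : Type*} {v : V → Finset (Sym2 V) → ℝ} {X : V → Finset (Sym2 V)} {i j : V}
    (h : Envies v X i j) : i ≠ j := by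
  rintro rfl
  exact lt_irrefl _ h

theorem admitsEFX_of_card_le_one (v : V → Finset (Sym2 V) → ℝ) (hM : #M ≤ 1) :
    AdmitsEFX M v := by
  set X := bundle M fun e ↦ (Quot.out e).1
  have hsub (i : V) : X i ⊆ M := bundle_subset _ _ i
  have erase_eq_empty {i : V} {e : Sym2 V} (he : e ∈ X i) : (X i).erase e = ∅ :=
    eq_empty_of_forall_notMem fun x hx ↦ ne_of_mem_erase hx <|
      card_le_one.1 hM _ (hsub i (mem_of_mem_erase hx)) _ (hsub i he)
  have eq_empty {i j : V} {e : Sym2 V} (hij : i ≠ j) (he : e ∈ X i) : X j = ∅ := by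
    refine eq_empty_of_forall_notMem fun x hx ↦ hij ?_
    rw [card_le_one.1 hM _ (hsub j hx) _ (hsub i he)] at hx
    exact (mem_bundle.1 he).2.symm.trans (mem_bundle.1 hx).2
  refine ⟨X, isAllocation_bundle _ _, fun i j henvy e he _ ↦ ?_, fun i j henvy e he _ ↦ ?_⟩
  · rw [erase_eq_empty he, eq_empty henvy.ne.symm he]
  · rw [erase_eq_empty he, eq_empty henvy.ne he]

/-- The assignment `σ` gives each item that is a good for some agent to an agent for whom it is a
good. -/
def RespectsGoods (M : Finset (Sym2 V)) (v : V → Finset (Sym2 V) → ℝ) (σ : Sym2 V → V) : Prop :=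
  ∀ e ∈ M, ∀ i, IsGoodFor (v i) M e → IsGoodFor (v (σ e)) M e

namespace RespectsGoods

theorem eq_of_isGoodFor (hσ : RespectsGoods M v σ) (hv : ValidInstance M v) (hij : i ≠ j)
    (he : e ∈ bundle M σ j) (he' : e' ∈ bundle M σ j) (hgood : IsGoodFor (v i) M e)
    (hgood' : IsGoodFor (v i) M e') : e = e' := by
  have eq_mk {e : Sym2 V} (he : e ∈ bundle M σ j) (hgood : IsGoodFor (v i) M e) : e = s(i, j) := by
    obtain ⟨heM, rfl⟩ := mem_bundle.1 he
    exact (Sym2.mem_and_mem_iff hij).1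
      ⟨hv.mem_of_isGoodFor heM hgood, hv.mem_of_isGoodFor heM (hσ e heM i hgood)⟩
  rw [eq_mk he hgood, eq_mk he' hgood']

theorem erase_bundle_le_empty (hσ : RespectsGoods M v σ) (hv : ValidInstance M v) (hij : i ≠ j)
    (he : e ∈ bundle M σ j) (hgood : IsGoodFor (v i) M e) :
    v i ((bundle M σ j).erase e) ≤ v i ∅ :=
  (hv.isMixedValuation i).le_empty ((erase_subset _ _).trans (bundle_subset _ _ _))
    fun _ hx hxgood ↦
      ne_of_mem_erase hx (hσ.eq_of_isGoodFor hv hij (mem_of_mem_erase hx) he hxgood hgood)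

theorem bundle_le_singleton (hσ : RespectsGoods M v σ) (hv : ValidInstance M v) (hij : i ≠ j)
    (he : e ∈ bundle M σ j) (hgood : IsGoodFor (v i) M e) :
    v i (bundle M σ j) ≤ v i {e} :=
  (hv.isMixedValuation i).le_of_forall_not_isGoodFor (singleton_subset_iff.2 he)
    (bundle_subset _ _ _) fun _ hx hxe hxgood ↦
      hxe (mem_singleton.2 (hσ.eq_of_isGoodFor hv hij hx he hxgood hgood))

theorem admitsEFX (hσ : RespectsGoods M v σ) (hv : ValidInstance M v)
    (h : ∀ i, (∀ e ∈ bundle M σ i, IsGoodFor (v i) M e) ∨ ∀ j, ¬ Envies v (bundle M σ) i j) :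
    AdmitsEFX M v := by
  have holds_goods {i j : V} (henvy : Envies v (bundle M σ) i j) :
      ∀ e ∈ bundle M σ i, IsGoodFor (v i) M e :=
    (h i).resolve_right fun hno ↦ hno j henvy
  refine ⟨bundle M σ, isAllocation_bundle M σ, fun i j henvy e he hlt ↦ ?_,
    fun i j henvy e he hle ↦ ?_⟩
  · have hgood := (hv.isMixedValuation i).isGoodFor_of_erase_lt (bundle_subset _ _ _) hlt
    exact (hσ.erase_bundle_le_empty hv henvy.ne he hgood).trans <|
      (hv.isMixedValuation i).empty_le (bundle_subset _ _ _) fun x hx ↦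
        (holds_goods henvy x hx).not_isChoreFor
  · exact absurd hle ((holds_goods henvy e he).erase_lt (bundle_subset _ _ _) he).not_ge

end RespectsGoods

theorem ValidInstance.not_envies (hv : ValidInstance M v)
    (hempty : v i ∅ ≤ v i (bundle M σ i)) (hgoods : ∀ e ∈ M, IsGoodFor (v i) M e → σ e = i)
    (j : V) : ¬ Envies v (bundle M σ) i j := by
  intro henvy
  refine henvy.not_ge (le_trans ?_ hempty)
  refine (hv.isMixedValuation i).le_empty (bundle_subset _ _ _) fun e he hgood ↦ henvy.ne ?_
  obtain ⟨heM, hej⟩ := mem_bundle.1 he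
  exact (hgoods e heM hgood).symm.trans hej

open Classical in
/-- A good of agent `i` of largest value as a single item. An agent without goods gets the loop
`s(i, i)`, which is not an item of a valid instance and is the favorite of no other agent. -/
noncomputable def favorite (M : Finset (Sym2 V)) (v : V → Finset (Sym2 V) → ℝ) (i : V) : Sym2 V :=
  if h : ({e ∈ M | IsGoodFor (v i) M e}).Nonempty then
    (exists_max_image _ (fun e ↦ v i {e}) h).choose
  else s(i, i)

theorem favorite_spec (he : e ∈ M) (hgood : IsGoodFor (v i) M e) :
    favorite M v i ∈ M ∧ IsGoodFor (v i) M (favorite M v i) ∧ v i {e} ≤ v i {favorite M v i} := by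
  classical
  have he : e ∈ {e ∈ M | IsGoodFor (v i) M e} := mem_filter.2 ⟨he, hgood⟩
  have hne : ({e ∈ M | IsGoodFor (v i) M e}).Nonempty := ⟨e, he⟩
  rw [favorite, dif_pos hne]
  obtain ⟨hmem, hmax⟩ := (exists_max_image _ (fun e ↦ v i {e}) hne).choose_spec
  exact ⟨(mem_filter.1 hmem).1, (mem_filter.1 hmem).2, hmax e he⟩

theorem favorite_cases (M : Finset (Sym2 V)) (v : V → Finset (Sym2 V) → ℝ) (i : V) :
    favorite M v i ∈ M ∧ IsGoodFor (v i) M (favorite M v i) ∨ favorite M v i = s(i, i) := by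
  classical
  by_cases hne : ({e ∈ M | IsGoodFor (v i) M e}).Nonempty
  · obtain ⟨e, he⟩ := hne
    have hspec := favorite_spec (mem_filter.1 he).1 (mem_filter.1 he).2
    exact Or.inl ⟨hspec.1, hspec.2.1⟩
  · exact Or.inr (by rw [favorite, dif_neg hne])

namespace ValidInstance

theorem isGoodFor_of_favorite_eq (hv : ValidInstance M v) (he : e ∈ M) (h : favorite M v i = e) :
    IsGoodFor (v i) M e := by
  subst h
  refine (favorite_cases M v i).elim And.right fun hloop ↦ ?_
  rw [hloop] at he
  exact absurd rfl (hv.ne_of_mk_mem he)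

theorem mem_favorite (hv : ValidInstance M v) (i : V) : i ∈ favorite M v i := by
  rcases favorite_cases M v i with ⟨hmem, hgood⟩ | hloop
  · exact hv.mem_of_isGoodFor hmem hgood
  · exact hloop ▸ Sym2.mem_mk_left i i

theorem favorite_eq_mk (hv : ValidInstance M v) (hij : i ≠ j)
    (h : favorite M v i = favorite M v j) : favorite M v i = s(i, j) :=
  (Sym2.mem_and_mem_iff hij).1 ⟨hv.mem_favorite i, h ▸ hv.mem_favorite j⟩

end ValidInstance

theorem RespectsGoods.not_envies_of_favorite (hσ : RespectsGoods M v σ) (hv : ValidInstance M v)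
    (hchore : ∀ e ∈ bundle M σ i, ¬ IsChoreFor (v i) M e)
    (hfav : favorite M v i ∈ M → σ (favorite M v i) = i) (j : V) :
    ¬ Envies v (bundle M σ) i j := by
  have hmix := hv.isMixedValuation i
  intro henvy
  refine henvy.not_ge ?_
  by_cases hwant : ∃ e ∈ bundle M σ j, IsGoodFor (v i) M e
  · obtain ⟨e, he, hgood⟩ := hwant
    obtain ⟨hfavM, -, hmax⟩ := favorite_spec (bundle_subset _ _ _ he) hgood
    calc
      v i (bundle M σ j) ≤ v i {e} := hσ.bundle_le_singleton hv henvy.ne he hgood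
      _ ≤ v i {favorite M v i} := hmax
      _ ≤ v i (bundle M σ i) := hmix.le_of_forall_not_isChoreFor
        (singleton_subset_iff.2 (mem_bundle.2 ⟨hfavM, hfav hfavM⟩)) (bundle_subset _ _ _)
        fun x hx _ ↦ hchore x hx
  · push Not at hwant
    exact (hmix.le_empty (bundle_subset _ _ _) hwant).trans
      (hmix.empty_le (bundle_subset _ _ _) hchore)

/-- The item `e` is a good for no agent. -/
def IsUnwanted (M : Finset (Sym2 V)) (v : V → Finset (Sym2 V) → ℝ) (e : Sym2 V) : Prop :=
  ∀ i, ¬ IsGoodFor (v i) M e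

section DistinctFavorites

variable {S : Set V}

/-- Agent `k` can be given the item `e` in an allocation that respects goods, gives all agents of
`S` their favorites, and gives unwanted items only to agents of `S` for whom they are dummies. -/
structure IsRecipient (M : Finset (Sym2 V)) (v : V → Finset (Sym2 V) → ℝ) (S : Set V)
    (e : Sym2 V) (k : V) : Prop where
  isGoodFor_of_isGoodFor : ∀ i, IsGoodFor (v i) M e → IsGoodFor (v k) M e
  eq_of_favorite_eq : ∀ i ∈ S, favorite M v i = e → k = i
  isGoodFor_or_isDummyFor : IsGoodFor (v k) M e ∨ k ∈ S ∧ IsDummyFor (v k) M e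

theorem exists_isRecipient (hv : ValidInstance M v) (hS : S.InjOn (favorite M v))
    (hdummy : IsUnwanted M v e → ∃ k ∈ S, IsDummyFor (v k) M e) (he : e ∈ M) :
    ∃ k, IsRecipient M v S e k := by
  by_cases hfav : ∃ k ∈ S, favorite M v k = e
  · obtain ⟨k, hk, hke⟩ := hfav
    have hgood := hv.isGoodFor_of_favorite_eq he hke
    exact ⟨k, fun _ _ ↦ hgood, fun i hi hie ↦ hS hk hi (hke.trans hie.symm), Or.inl hgood⟩
  push Not at hfav
  by_cases hwant : ∃ k, IsGoodFor (v k) M e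
  · obtain ⟨k, hgood⟩ := hwant
    exact ⟨k, fun _ _ ↦ hgood, fun i hi hie ↦ absurd hie (hfav i hi), Or.inl hgood⟩
  · push Not at hwant
    obtain ⟨k, hk, hke⟩ := hdummy hwant
    exact ⟨k, fun i hi ↦ absurd hi (hwant i), fun i hi hie ↦ absurd hie (hfav i hi),
      Or.inr ⟨hk, hke⟩⟩

theorem admitsEFX_of_injOn_favorite (hv : ValidInstance M v) (hS : S.InjOn (favorite M v))
    (hdummy : ∀ e ∈ M, IsUnwanted M v e → ∃ k ∈ S, IsDummyFor (v k) M e) : AdmitsEFX M v := by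
  have hrec (e : Sym2 V) : ∃ k, e ∈ M → IsRecipient M v S e k := by
    by_cases he : e ∈ M
    · exact (exists_isRecipient hv hS (hdummy e he) he).imp fun _ hk _ ↦ hk
    · exact ⟨(Quot.out e).1, fun he' ↦ absurd he' he⟩
  choose σ hσ using hrec
  have hrespects : RespectsGoods M v σ := fun e he ↦ (hσ e he).isGoodFor_of_isGoodFor
  refine hrespects.admitsEFX hv fun i ↦ ?_
  by_cases hi : i ∈ S
  · refine Or.inr (hrespects.not_envies_of_favorite hv (fun e he ↦ ?_)
      fun hmem ↦ (hσ _ hmem).eq_of_favorite_eq i hi rfl)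
    obtain ⟨heM, rfl⟩ := mem_bundle.1 he
    exact (hσ e heM).isGoodFor_or_isDummyFor.elim IsGoodFor.not_isChoreFor
      fun h ↦ h.2.not_isChoreFor
  · refine Or.inl fun e he ↦ ?_
    obtain ⟨heM, rfl⟩ := mem_bundle.1 he
    exact (hσ e heM).isGoodFor_or_isDummyFor.resolve_right fun h ↦ hi h.1

end DistinctFavorites

/-- Two agents `a` and `b` share the favorite `s(a, b)`, all other agents have the same favorite
as `c`, and each item that is a good for some agent is the favorite of both its endpoints. -/
structure IsSharedPair (M : Finset (Sym2 V)) (v : V → Finset (Sym2 V) → ℝ) (a b c : V) :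
    Prop where
  ne_ab : a ≠ b
  ne_ac : a ≠ c
  ne_bc : b ≠ c
  favorite_eq : favorite M v a = favorite M v b
  favorite_eq_of_ne : ∀ z, z ≠ a → z ≠ b → favorite M v z = favorite M v c
  favorite_eq_of_isGoodFor : ∀ e ∈ M, ∀ i, IsGoodFor (v i) M e → ∀ j ∈ e, favorite M v j = e

/-- The assignment that gives the star of `b` to `x`, the edge `s(a, c)` to `b`, and all other
edges to `c`. -/
def starAssignment (a b c x : V) (e : Sym2 V) : V :=
  if b ∈ e then x else if e = s(a, c) then b else c

theorem starAssignment_of_mem {x : V} (hb : b ∈ e) : starAssignment a b c x e = x :=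
  if_pos hb

theorem starAssignment_eq_or (a b c x : V) (e : Sym2 V) :
    starAssignment a b c x e = x ∨ starAssignment a b c x e = b ∨ starAssignment a b c x e = c := by
  unfold starAssignment
  split_ifs <;> simp only [true_or, or_true]

namespace IsSharedPair

theorem mem_of_isGoodFor (h : IsSharedPair M v a b c) (hv : ValidInstance M v) (he : e ∈ M)
    (hgood : IsGoodFor (v a) M e) : b ∈ e := by
  rw [← h.favorite_eq_of_isGoodFor e he a hgood a (hv.mem_of_isGoodFor he hgood), h.favorite_eq]
  exact hv.mem_favorite b

theorem isUnwanted_mk (h : IsSharedPair M v a b c) (hv : ValidInstance M v) (he : s(a, c) ∈ M) :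
    IsUnwanted M v s(a, c) := by
  intro i hi
  have hfav := h.favorite_eq_of_isGoodFor _ he i hi a (Sym2.mem_mk_left a c)
  have hb := h.mem_of_isGoodFor hv he (hv.isGoodFor_of_favorite_eq he hfav)
  exact (Sym2.mem_iff.1 hb).elim h.ne_ab.symm h.ne_bc

theorem respectsGoods (h : IsSharedPair M v a b c) (hv : ValidInstance M v) {x : V}
    (hx : x = a ∨ x = b) : RespectsGoods M v (starAssignment a b c x) := by
  intro e he i hgood
  have hfav := h.favorite_eq_of_isGoodFor e he i hgood
  unfold starAssignment
  refine hv.isGoodFor_of_favorite_eq he ?_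
  split_ifs with hb hac
  · rcases hx with rfl | rfl
    · exact h.favorite_eq.trans (hfav b hb)
    · exact hfav x hb
  · subst hac
    exact absurd hgood (h.isUnwanted_mk hv he i)
  · have hi := hv.mem_of_isGoodFor he hgood
    rw [← h.favorite_eq_of_ne i ?_ (ne_of_mem_of_not_mem hi hb), hfav i hi]
    rintro rfl
    exact hb (h.mem_of_isGoodFor hv he hgood)

theorem starAssignment_of_isGoodFor_right (h : IsSharedPair M v a b c) (hv : ValidInstance M v)
    (x : V) (he : e ∈ M) (hgood : IsGoodFor (v c) M e) : starAssignment a b c x e = c := by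
  have hc := hv.mem_of_isGoodFor he hgood
  have hb : b ∉ e := by
    intro hb
    have hfav := h.favorite_eq_of_isGoodFor e he c hgood b hb
    rw [← hfav, ← h.favorite_eq, hv.favorite_eq_mk h.ne_ab h.favorite_eq] at hc
    exact (Sym2.mem_iff.1 hc).elim h.ne_ac.symm h.ne_bc.symm
  have hac : e ≠ s(a, c) := by
    rintro rfl
    exact h.isUnwanted_mk hv he c hgood
  simp only [starAssignment, hb, hac, if_false]

theorem not_isChoreFor_right (h : IsSharedPair M v a b c) (hv : ValidInstance M v) (he : e ∈ M)
    (hb : b ∉ e) (hac : e ≠ s(a, c)) : ¬ IsChoreFor (v c) M e := by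
  by_cases hc : c ∈ e
  swap
  · exact hv.not_isChoreFor_of_notMem he hc
  obtain ⟨z, rfl⟩ := hc
  have hcz : c ≠ z := hv.ne_of_mk_mem he
  have hza : z ≠ a := fun hza ↦ hac (hza ▸ Sym2.eq_swap)
  have hzb : z ≠ b := fun hzb ↦ hb (hzb ▸ Sym2.mem_mk_right c z)
  have hfav := hv.favorite_eq_mk hcz (h.favorite_eq_of_ne z hza hzb).symm
  exact (hv.isGoodFor_of_favorite_eq he hfav).not_isChoreFor

theorem not_isChoreFor_left (h : IsSharedPair M v a b c) (hv : ValidInstance M v) (he : e ∈ M)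
    (hb : b ∈ e) : ¬ IsChoreFor (v a) M e := by
  by_cases ha : a ∈ e
  · have hfav := hv.favorite_eq_mk h.ne_ab h.favorite_eq
    rw [← (Sym2.mem_and_mem_iff h.ne_ab).1 ⟨ha, hb⟩] at hfav
    exact (hv.isGoodFor_of_favorite_eq he hfav).not_isChoreFor
  · exact hv.not_isChoreFor_of_notMem he ha

theorem not_envies_right (h : IsSharedPair M v a b c) (hv : ValidInstance M v) {x : V}
    (hx : x = a ∨ x = b) (j : V) : ¬ Envies v (bundle M (starAssignment a b c x)) c j := by
  have hxc : x ≠ c := by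
    rcases hx with rfl | rfl
    · exact h.ne_ac
    · exact h.ne_bc
  refine hv.not_envies ((hv.isMixedValuation c).empty_le (bundle_subset _ _ _) fun e he ↦ ?_)
    (fun e he ↦ h.starAssignment_of_isGoodFor_right hv x he) j
  obtain ⟨heM, hec⟩ := mem_bundle.1 he
  unfold starAssignment at hec
  split_ifs at hec with hb hac
  · exact absurd hec hxc
  · exact absurd hec h.ne_bc
  · exact h.not_isChoreFor_right hv heM hb hac

theorem admitsEFX_of_not_envies (h : IsSharedPair M v a b c) (hv : ValidInstance M v) {x : V}
    (hx : x = a ∨ x = b) (hxj : ∀ j, ¬ Envies v (bundle M (starAssignment a b c x)) x j)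
    (hbj : ∀ j, ¬ Envies v (bundle M (starAssignment a b c x)) b j) : AdmitsEFX M v := by
  refine (h.respectsGoods hv hx).admitsEFX hv fun i ↦ or_iff_not_imp_right.2 fun hi e he ↦ ?_
  obtain ⟨-, rfl⟩ := mem_bundle.1 he
  rcases starAssignment_eq_or a b c x e with heq | heq | heq <;> rw [heq] at hi
  · exact absurd hxj hi
  · exact absurd hbj hi
  · exact absurd (h.not_envies_right hv hx) hi

theorem bundle_starAssignment_left (h : IsSharedPair M v a b c) :
    bundle M (starAssignment a b c a) a = {e ∈ M | b ∈ e} := by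
  refine filter_congr fun e _ ↦ ⟨fun hea ↦ ?_, starAssignment_of_mem⟩
  unfold starAssignment at hea
  split_ifs at hea with hb
  · exact hb
  · exact absurd hea.symm h.ne_ab
  · exact absurd hea.symm h.ne_ac

theorem not_envies_left (h : IsSharedPair M v a b c) (hv : ValidInstance M v) (j : V) :
    ¬ Envies v (bundle M (starAssignment a b c a)) a j := by
  refine hv.not_envies ((hv.isMixedValuation a).empty_le (bundle_subset _ _ _) fun e he ↦ ?_)
    (fun e he hgood ↦ starAssignment_of_mem (h.mem_of_isGoodFor hv he hgood)) j
  rw [h.bundle_starAssignment_left] at he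
  exact h.not_isChoreFor_left hv (mem_filter.1 he).1 (mem_filter.1 he).2

theorem admitsEFX_of_star_le_empty (h : IsSharedPair M v a b c) (hv : ValidInstance M v)
    (hstar : v b {e ∈ M | b ∈ e} ≤ v b ∅) : AdmitsEFX M v := by
  have hmix := hv.isMixedValuation b
  have bundle_le_empty (j : V) : v b (bundle M (starAssignment a b c a) j) ≤ v b ∅ := by
    by_cases hja : j = a
    · rwa [hja, h.bundle_starAssignment_left]
    refine hmix.le_empty (bundle_subset _ _ _) fun e he hgood ↦ hja ?_
    obtain ⟨heM, hej⟩ := mem_bundle.1 he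
    exact hej.symm.trans (starAssignment_of_mem (hv.mem_of_isGoodFor heM hgood))
  have empty_le_bundle : v b ∅ ≤ v b (bundle M (starAssignment a b c a) b) := by
    refine hmix.empty_le (bundle_subset _ _ _) fun e he ↦ ?_
    obtain ⟨heM, heb⟩ := mem_bundle.1 he
    exact hv.not_isChoreFor_of_notMem heM fun hb ↦
      h.ne_ab ((starAssignment_of_mem hb).symm.trans heb)
  exact h.admitsEFX_of_not_envies hv (Or.inl rfl) (h.not_envies_left hv)
    fun j ↦ ((bundle_le_empty j).trans empty_le_bundle).not_gt

theorem admitsEFX_of_empty_le_star (h : IsSharedPair M v a b c) (hv : ValidInstance M v)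
    (hstar : v b ∅ ≤ v b {e ∈ M | b ∈ e}) : AdmitsEFX M v := by
  have star_subset : {e ∈ M | b ∈ e} ⊆ bundle M (starAssignment a b c b) b :=
    monotone_filter_right M fun _ _ hb ↦ starAssignment_of_mem hb
  have star_le_bundle :
      v b {e ∈ M | b ∈ e} ≤ v b (bundle M (starAssignment a b c b) b) := by
    refine (hv.isMixedValuation b).le_of_forall_not_isChoreFor star_subset (bundle_subset _ _ _)
      fun e he hestar ↦ ?_
    have heM := bundle_subset _ _ _ he
    exact hv.not_isChoreFor_of_notMem heM fun hb ↦ hestar (mem_filter.2 ⟨heM, hb⟩)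
  have not_envies := hv.not_envies (hstar.trans star_le_bundle) fun e he hgood ↦
    starAssignment_of_mem (hv.mem_of_isGoodFor he hgood)
  exact h.admitsEFX_of_not_envies hv (Or.inr rfl) not_envies not_envies

end IsSharedPair

/-- Every set of agents with pairwise different favorites is contained in an unwanted edge. This is
what remains when `admitsEFX_of_injOn_favorite` does not apply. -/
def IsBlocked (M : Finset (Sym2 V)) (v : V → Finset (Sym2 V) → ℝ) : Prop :=
  ∀ S : Set V, S.InjOn (favorite M v) → ∃ e ∈ M, IsUnwanted M v e ∧ ∀ k ∈ S, k ∈ e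

theorem admitsEFX_of_not_isBlocked (hv : ValidInstance M v) (h : ¬ IsBlocked M v) :
    AdmitsEFX M v := by
  unfold IsBlocked at h
  push Not at h
  obtain ⟨S, hS, hblock⟩ := h
  refine admitsEFX_of_injOn_favorite hv hS fun e he hbad ↦ ?_
  obtain ⟨k, hk, hke⟩ := hblock e he hbad
  exact ⟨k, hk, hv.2.2 k e he hke⟩

namespace IsBlocked

theorem card_le_one (h : IsBlocked M v) (hv : ValidInstance M v)
    (hinj : (favorite M v).Injective) : #M ≤ 1 := by
  obtain ⟨e, -, -, hmem⟩ := h Set.univ hinj.injOn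
  have eq_e (x : Sym2 V) (hx : x ∈ M) : x = e := by
    induction x using Sym2.ind with
    | _ i j =>
      have hij : i ≠ j := hv.ne_of_mk_mem hx
      exact ((Sym2.mem_and_mem_iff hij).1 ⟨hmem i trivial, hmem j trivial⟩).symm
  exact Finset.card_le_one.2 fun x hx y hy ↦ (eq_e x hx).trans (eq_e y hy).symm

theorem favorite_eq_of_isGoodFor (h : IsBlocked M v) (hv : ValidInstance M v) (he : e ∈ M)
    (hgood : IsGoodFor (v i) M e) (hj : j ∈ e) : favorite M v j = e := by
  obtain ⟨k, rfl⟩ := hv.mem_of_isGoodFor he hgood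
  have hik : i ≠ k := hv.ne_of_mk_mem he
  have hfav : favorite M v i = favorite M v k := by
    by_contra hne
    obtain ⟨e, -, hbad, hmem⟩ := h {i, k} (Set.injOn_pair.2 fun heq ↦ absurd heq hne)
    rw [(Sym2.mem_and_mem_iff hik).1 ⟨hmem i (by simp), hmem k (by simp)⟩] at hbad
    exact hbad i hgood
  have hmk := hv.favorite_eq_mk hik hfav
  rcases Sym2.mem_iff.1 hj with rfl | rfl
  · exact hmk
  · exact hfav.symm.trans hmk

theorem favorite_eq_or (h : IsBlocked M v) (i j k : V) :
    favorite M v i = favorite M v j ∨ favorite M v i = favorite M v k ∨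
      favorite M v j = favorite M v k := by
  by_contra! hne
  obtain ⟨hij, hik, hjk⟩ := hne
  have hinj : ({i, j, k} : Set V).InjOn (favorite M v) := by
    rintro x (rfl | rfl | rfl) y (rfl | rfl | rfl) hxy <;> grind
  obtain ⟨e, -, -, hmem⟩ := h _ hinj
  have he : e = s(i, j) :=
    (Sym2.mem_and_mem_iff (ne_of_apply_ne _ hij)).1 ⟨hmem i (by simp), hmem j (by simp)⟩
  have hk : k ∈ s(i, j) := he ▸ hmem k (by simp)
  exact (Sym2.mem_iff.1 hk).elim (ne_of_apply_ne _ hik).symm (ne_of_apply_ne _ hjk).symm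

theorem exists_isSharedPair (h : IsBlocked M v) (hv : ValidInstance M v) (hab : a ≠ b)
    (hfav : favorite M v a = favorite M v b) : ∃ c, IsSharedPair M v a b c := by
  have hmk := hv.favorite_eq_mk hab hfav
  have favorite_ne {z : V} (hza : z ≠ a) (hzb : z ≠ b) : favorite M v a ≠ favorite M v z := by
    intro heq
    have hz : z ∈ s(a, b) := by rw [← hmk, heq]; exact hv.mem_favorite z
    exact (Sym2.mem_iff.1 hz).elim hza hzb
  obtain ⟨e, he, hbad, ha⟩ := h {a} (Set.injOn_singleton _ _)
  obtain ⟨c, rfl⟩ := ha a rfl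
  have hac : a ≠ c := hv.ne_of_mk_mem he
  have hbc : b ≠ c := by
    rintro rfl
    exact hbad a (hv.isGoodFor_of_favorite_eq he hmk)
  refine ⟨c, hab, hac, hbc, hfav, fun z hza hzb ↦ ?_,
    fun e he i hgood j hj ↦ h.favorite_eq_of_isGoodFor hv he hgood hj⟩
  exact ((h.favorite_eq_or a z c).resolve_left (favorite_ne hza hzb)).resolve_left
    (favorite_ne hac.symm hbc.symm)

end IsBlocked

theorem stmt11_general {V : Type*} [DecidableEq V]
    (M : Finset (Sym2 V)) (v : V → Finset (Sym2 V) → ℝ)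
    (hvalid : ValidInstance M v) :
    ∃ X : V → Finset (Sym2 V),
      IsAllocation M X ∧ CondEnviedStrict v X ∧ CondOwnWeak v X := by
  change AdmitsEFX M v
  by_cases hblock : IsBlocked M v
  swap
  · exact admitsEFX_of_not_isBlocked hvalid hblock
  by_cases hinj : (favorite M v).Injective
  · exact admitsEFX_of_card_le_one v (hblock.card_le_one hvalid hinj)
  obtain ⟨a, b, hfav, hab⟩ := Function.not_injective_iff.1 hinj
  obtain ⟨c, hpair⟩ := hblock.exists_isSharedPair hvalid hab hfav
  rcases le_total (v b {e ∈ M | b ∈ e}) (v b ∅) with hstar | hstar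
  · exact hpair.admitsEFX_of_star_le_empty hvalid hstar
  · exact hpair.admitsEFX_of_empty_le_star hvalid hstar

/-- For every mixed instance on a simple graph, an EFX⁺₀ allocation
always exists. -/
theorem stmt11 {V : Type*} [Fintype V] [DecidableEq V]
    (M : Finset (Sym2 V)) (v : V → Finset (Sym2 V) → ℝ)
    (hvalid : ValidInstance M v) :
    ∃ X : V → Finset (Sym2 V),
      IsAllocation M X ∧ CondEnviedStrict v X ∧ CondOwnWeak v X :=
  stmt11_general M v hvalid
end

section
/- Consider a mixed instance on a star graph (one center agent adjacent to all other agents, the satellites) with at least two edges. If an edge e is a chore for its satellite endpoint agent, then in every EFX^0_- orientation (and hence in every EFX^0_0 orientation) the edge e is allocated to the center agent. -/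
open Finset

variable {V : Type*} [DecidableEq V]

/-!
If an agent `a` owns the chore `e` and is incident to no other edge, then her bundle is `{e}`, worth
less to her than the empty bundle. The owner of any other edge holds only dummies for `a`: a
nonempty bundle worth exactly as much as the empty bundle, also after one item is removed. So `a`
envies that owner even after the removal, contradicting EFX⁰.
-/

theorem IsDummyFor.value_erase {v : Finset (Sym2 V) → ℝ} {M S : Finset (Sym2 V)} {e : Sym2 V}
    (he : IsDummyFor v M e) (hS : S ⊆ M) (heS : e ∈ S) : v (S.erase e) = v S := by
  rw [← he (S.erase e) (erase_subset_erase e hS), insert_erase heS]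

theorem value_eq_value_empty_of_forall_isDummyFor {v : Finset (Sym2 V) → ℝ}
    {M S : Finset (Sym2 V)} (hS : S ⊆ M) (hdummy : ∀ e ∈ S, IsDummyFor v M e) : v S = v ∅ := by
  induction S using Finset.induction_on with
  | empty => rfl
  | insert e S heS ih =>
    calc v (insert e S) = v ((insert e S).erase e) :=
          ((hdummy e (mem_insert_self e S)).value_erase hS (mem_insert_self e S)).symm
      _ = v S := by rw [erase_insert heS]
      _ = v ∅ := ih ((subset_insert e S).trans hS) fun g hg ↦ hdummy g (mem_insert_of_mem hg)

theorem IsChoreFor.value_singleton_lt {v : Finset (Sym2 V) → ℝ} {M : Finset (Sym2 V)} {e : Sym2 V}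
    (he : IsChoreFor v M e) : v {e} < v ∅ :=
  he ∅ (empty_subset _)

theorem CondEnviedWeak.value_empty_le {v : V → Finset (Sym2 V) → ℝ} {X : V → Finset (Sym2 V)}
    {M : Finset (Sym2 V)} {i j : V} (hX : CondEnviedWeak v X) (hXj : (X j).Nonempty)
    (hsub : X j ⊆ M) (hdummy : ∀ e ∈ X j, IsDummyFor (v i) M e) : v i ∅ ≤ v i (X i) := by
  by_contra! hlt
  obtain ⟨e, he⟩ := hXj
  have hvalue : v i (X j) = v i ∅ := value_eq_value_empty_of_forall_isDummyFor hsub hdummy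
  have herase : v i ((X j).erase e) = v i (X j) := (hdummy e he).value_erase hsub he
  have henvy : Envies v X i j := hlt.trans_eq hvalue.symm
  have hle : v i ((X j).erase e) ≤ v i (X i) := hX i j henvy e he herase.le
  rw [herase, hvalue] at hle
  exact hle.not_gt hlt

theorem IsOrientation.subset_filter_mem {M : Finset (Sym2 V)} {X : V → Finset (Sym2 V)}
    (hor : IsOrientation X) {i : V} (hsub : X i ⊆ M) : X i ⊆ {g ∈ M | i ∈ g} :=
  fun g hg ↦ mem_filter.2 ⟨hsub hg, hor i g hg⟩

theorem notMem_of_isChoreFor_of_filter_mem_eq_singleton {M : Finset (Sym2 V)}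
    {v : V → Finset (Sym2 V) → ℝ} {X : V → Finset (Sym2 V)} {a : V} {e : Sym2 V}
    (hdummy : ∀ g ∈ M, a ∉ g → IsDummyFor (v a) M g) (hM : M.Nontrivial)
    (hpendant : {g ∈ M | a ∈ g} = ({e} : Finset (Sym2 V))) (hchore : IsChoreFor (v a) M e)
    (halloc : IsAllocation M X) (hor : IsOrientation X) (hefx : CondEnviedWeak v X) :
    e ∉ X a := by
  intro hea
  have hXa : X a = {e} :=
    (hpendant ▸ hor.subset_filter_mem (halloc.1 a)).antisymm (singleton_subset_iff.2 hea)
  have heM : e ∈ M := halloc.1 a hea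
  obtain ⟨f, hfM, hfe⟩ := hM.exists_ne e
  obtain ⟨j, hfj, -⟩ := halloc.2 f hfM
  have hja : j ≠ a := by
    rintro rfl
    exact hfe (by simpa only [hXa, mem_singleton] using hfj)
  have hXj : ∀ g ∈ X j, a ∉ g := by
    intro g hgj hag
    have hge : g = e := mem_singleton.1 (hpendant ▸ mem_filter.2 ⟨halloc.1 j hgj, hag⟩)
    exact hja ((halloc.2 e heM).unique (hge ▸ hgj) hea)
  have hle : v a ∅ ≤ v a (X a) :=
    hefx.value_empty_le ⟨f, hfj⟩ (halloc.1 j) fun g hg ↦ hdummy g (halloc.1 j hg) (hXj g hg)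
  exact (hXa ▸ hle).not_gt hchore.value_singleton_lt

theorem stmt16_general {M : Finset (Sym2 V)} {v : V → Finset (Sym2 V) → ℝ}
    {X : V → Finset (Sym2 V)} {a c : V}
    (hdummy : ∀ g ∈ M, a ∉ g → IsDummyFor (v a) M g) (hM : M.Nontrivial)
    (hpendant : {g ∈ M | a ∈ g} = ({s(a, c)} : Finset (Sym2 V)))
    (hchore : IsChoreFor (v a) M s(a, c))
    (halloc : IsAllocation M X) (hor : IsOrientation X) (hefx : CondEnviedWeak v X) :
    s(a, c) ∈ X c := by
  have heM : s(a, c) ∈ M := filter_subset _ _ (hpendant ▸ mem_singleton_self _)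
  obtain ⟨i, hi, -⟩ := halloc.2 _ heM
  rcases Sym2.mem_iff.1 (hor i _ hi) with rfl | rfl
  · exact absurd hi (notMem_of_isChoreFor_of_filter_mem_eq_singleton
      hdummy hM hpendant hchore halloc hor hefx)
  · exact hi

theorem filter_mem_eq_singleton_of_star {M : Finset (Sym2 V)} {a c : V}
    (hstar : ∀ e ∈ M, c ∈ e) (hac : a ≠ c) (he : s(a, c) ∈ M) :
    {g ∈ M | a ∈ g} = ({s(a, c)} : Finset (Sym2 V)) := by
  ext g
  rw [mem_filter, mem_singleton]
  constructor
  · rintro ⟨hg, hag⟩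
    exact (Sym2.mem_and_mem_iff hac).1 ⟨hag, hstar g hg⟩
  · rintro rfl
    exact ⟨he, Sym2.mem_mk_left a c⟩

/-- On a star with center `c` and at least two edges, if an edge is a
chore for its satellite endpoint, then in every EFX⁰₋ orientation (hence in every
EFX⁰₀ orientation) that edge is allocated to the center. -/
theorem stmt16 {V : Type*} [DecidableEq V]
    (c : V) (M : Finset (Sym2 V)) (v : V → Finset (Sym2 V) → ℝ)
    (hvalid : ValidInstance M v)
    (hstar : ∀ e ∈ M, c ∈ e)
    (hcard : 2 ≤ M.card)
    (e : Sym2 V) (he : e ∈ M)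
    (a : V) (ha : a ∈ e) (hac : a ≠ c)
    (hchore : IsChoreFor (v a) M e) :
    ∀ X : V → Finset (Sym2 V), IsAllocation M X → IsOrientation X →
      ((CondEnviedWeak v X ∧ CondOwnStrict v X) → e ∈ X c) ∧
      ((CondEnviedWeak v X ∧ CondOwnWeak v X) → e ∈ X c) := by
  obtain rfl : e = s(a, c) := (Sym2.mem_and_mem_iff hac).1 ⟨ha, hstar e he⟩
  have hcenter := fun X ↦ stmt16_general (X := X) (hvalid.2.2 a)
    (one_lt_card_iff_nontrivial.1 hcard) (filter_mem_eq_singleton_of_star hstar hac he) hchore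
  exact fun X halloc hor ↦
    ⟨fun h ↦ hcenter X halloc hor h.1, fun h ↦ hcenter X halloc hor h.1⟩
end

section
/- Consider the instance with four agents a, b_1, b_2, b_3 and four edges (a, b_1), (b_1, b_2), (b_2, b_3), (b_1, b_3), with additive valuations in which every edge has value −1 to both of its endpoint agents and value 0 to all other agents (so every edge is a chore for both endpoints). Then in every EFX^+_- orientation of this graph, the edge (a, b_1) is allocated to agent a. -/
/-!
Suppose every item is a chore for its owner and some agent owns nothing. An agent with two or more
items then envies the empty bundle and still does so after giving up one item, which EFX₋ forbids;
hence every agent owns at most one item and there are fewer items than agents. So in an EFX₋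
orientation of a graph with at least as many edges as vertices and only chores, nobody is
empty-handed, and an agent with a single incident edge must own that edge. The gadget has four
vertices and four edges, and `(a, b₁)` is the only edge at `a`.
-/

open Finset

variable {V : Type*} [DecidableEq V]

/-- The edges of the gadget: `(a, b₁), (b₁, b₂), (b₂, b₃), (b₁, b₃)`, where
`a = 0`, `b₁ = 1`, `b₂ = 2`, `b₃ = 3`. -/
def gadgetEdges : Finset (Sym2 (Fin 4)) := {s(0, 1), s(1, 2), s(2, 3), s(1, 3)}

section Chores

variable {M : Finset (Sym2 V)}

theorem isChoreFor_of_forall_eq_sum {v : Finset (Sym2 V) → ℝ} {w : Sym2 V → ℝ} {e : Sym2 V}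
    (hv : ∀ S, v S = ∑ f ∈ S, w f) (he : w e < 0) : IsChoreFor v M e := by
  intro S hS
  have heS : e ∉ S := fun h => notMem_erase e M (hS h)
  rw [hv, hv, sum_insert heS]
  exact add_lt_of_neg_left _ he

theorem IsChoreFor.val_lt_val_erase {v : Finset (Sym2 V) → ℝ} {S : Finset (Sym2 V)} {e : Sym2 V}
    (h : IsChoreFor v M e) (hS : S ⊆ M) (he : e ∈ S) : v S < v (S.erase e) := by
  simpa only [insert_erase he] using h (S.erase e) (erase_subset_erase e hS)

theorem val_lt_val_empty_of_forall_isChoreFor {v : Finset (Sym2 V) → ℝ} {S : Finset (Sym2 V)}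
    (hchore : ∀ e ∈ S, IsChoreFor v M e) (hS : S ⊆ M) (hne : S.Nonempty) : v S < v ∅ := by
  induction hne using Finset.Nonempty.cons_induction with
  | singleton e =>
    have he : e ∈ ({e} : Finset (Sym2 V)) := mem_singleton_self e
    simpa only [erase_singleton] using (hchore e he).val_lt_val_erase hS he
  | cons e T heT _ ih =>
    have he : e ∈ cons e T heT := mem_cons_self e T
    calc v (cons e T heT) < v ((cons e T heT).erase e) := (hchore e he).val_lt_val_erase hS he
      _ = v T := by rw [erase_cons]
      _ < v ∅ := ih (fun f hf => hchore f (mem_cons_of_mem hf)) ((subset_cons heT).trans hS)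

end Chores

theorem IsAllocation.card_le_sum_card {V : Type*} [Fintype V] {M : Finset (Sym2 V)}
    {X : V → Finset (Sym2 V)} (hX : IsAllocation M X) : #M ≤ ∑ i, #(X i) := by
  classical
  have hcover : M ⊆ univ.biUnion X := fun e he =>
    let ⟨i, hi, _⟩ := hX.2 e he
    mem_biUnion.mpr ⟨i, mem_univ i, hi⟩
  exact (card_le_card hcover).trans card_biUnion_le

section Bundles

variable {M : Finset (Sym2 V)} {v : V → Finset (Sym2 V) → ℝ} {X : V → Finset (Sym2 V)}

theorem CondOwnStrict.card_le_one_of_eq_empty (hown : CondOwnStrict v X) {i j : V}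
    (hi : X i = ∅) (hj : X j ⊆ M) (hchore : ∀ e ∈ X j, IsChoreFor (v j) M e) :
    #(X j) ≤ 1 := by
  by_contra! hcard
  obtain ⟨e, he⟩ : (X j).Nonempty := card_pos.mp (zero_lt_one.trans hcard)
  have henvy : Envies v X j i := by
    simpa only [Envies, hi] using val_lt_val_empty_of_forall_isChoreFor hchore hj ⟨e, he⟩
  have hle : v j ∅ ≤ v j ((X j).erase e) := by
    simpa only [hi] using hown j i henvy e he ((hchore e he).val_lt_val_erase hj he)
  have hlt : v j ((X j).erase e) < v j ∅ :=
    val_lt_val_empty_of_forall_isChoreFor (fun f hf => hchore f (mem_of_mem_erase hf))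
      ((erase_subset e (X j)).trans hj)
      ((erase_nonempty he).mpr (one_lt_card_iff_nontrivial.mp hcard))
  exact hlt.not_ge hle

theorem IsAllocation.nonempty_of_condOwnStrict [Fintype V] (hX : IsAllocation M X)
    (hown : CondOwnStrict v X) (hchore : ∀ i, ∀ e ∈ X i, IsChoreFor (v i) M e)
    (hcard : Fintype.card V ≤ #M) (i : V) : (X i).Nonempty := by
  by_contra hne
  have hi : X i = ∅ := not_nonempty_iff_eq_empty.mp hne
  have hone : ∀ j, #(X j) ≤ 1 := fun j =>
    hown.card_le_one_of_eq_empty hi (hX.1 j) (hchore j)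
  have hlt : #M < Fintype.card V :=
    calc #M ≤ ∑ j, #(X j) := hX.card_le_sum_card
      _ < ∑ _j : V, 1 :=
        sum_lt_sum (fun j _ => hone j) ⟨i, mem_univ i, by rw [hi, card_empty]; exact one_pos⟩
      _ = Fintype.card V := Fintype.card_eq_sum_ones.symm
  exact hlt.not_ge hcard

theorem stmt17_general [Fintype V] (hcard : Fintype.card V ≤ #M)
    (hchore : ∀ i, ∀ e ∈ M, i ∈ e → IsChoreFor (v i) M e)
    (hX : IsAllocation M X) (hO : IsOrientation X) (hown : CondOwnStrict v X)
    {a : V} {e : Sym2 V} (hleaf : ∀ f ∈ M, a ∈ f → f = e) : e ∈ X a := by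
  have howner : ∀ i, ∀ f ∈ X i, IsChoreFor (v i) M f := fun i f hf =>
    hchore i f (hX.1 i hf) (hO i f hf)
  obtain ⟨f, hf⟩ := hX.nonempty_of_condOwnStrict hown howner hcard a
  exact hleaf f (hX.1 a hf) (hO a f hf) ▸ hf

end Bundles

/-- In the gadget where every edge is worth `-1` to both of its
endpoint agents and `0` to the others, every EFX⁺₋ orientation allocates the edge
`(a, b₁)` to agent `a`. -/
theorem stmt17 (v : Fin 4 → Finset (Sym2 (Fin 4)) → ℝ)
    (hv : ∀ (i : Fin 4) (S : Finset (Sym2 (Fin 4))),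
      v i S = ∑ e ∈ S, (if i ∈ e ∧ e ∈ gadgetEdges then (-1 : ℝ) else 0)) :
    ∀ X : Fin 4 → Finset (Sym2 (Fin 4)),
      IsAllocation gadgetEdges X → IsOrientation X →
        (CondEnviedStrict v X ∧ CondOwnStrict v X) →
        s(0, 1) ∈ X 0 := by
  intro X hX hO hEFX
  have hchore : ∀ i, ∀ e ∈ gadgetEdges, i ∈ e → IsChoreFor (v i) gadgetEdges e := fun i e he hi =>
    isChoreFor_of_forall_eq_sum (hv i) (by simp only [hi, he, and_self, if_true, neg_one_lt_zero])
  exact stmt17_general (by decide) hchore hX hO hEFX.2 (by decide)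
end

section
/- Consider a chores instance on a simple graph G = (N, M), and let G' = (N, M') be the graph obtained from G by deleting every edge that is a dummy for at least one of its two endpoint agents (so in the restricted chores instance on G', obtained by restricting each valuation v_i to subsets of M', every remaining edge is a chore for both of its endpoints). Then G has an EFX_- orientation if and only if G' has an EFX_- orientation. -/
open Finset

variable {V : Type*} [DecidableEq V]

/-!
In an orientation, the agent at the other end of an edge `e` held by agent `i` holds only edges
not incident to `i`, so its bundle is worth `v i ∅` to `i`. In a chores instance nothing is worth
more than `∅`. Hence an orientation is EFX₋ exactly when every strictly improving removal of one
edge from an agent's own bundle brings that bundle to the value of `∅`. This condition compares no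
two agents: it survives deleting edges, because bundles only gain value, and it survives adding
edges oriented towards an endpoint for which they are dummies.
-/

section Marginals

variable {w : Finset (Sym2 V) → ℝ} {M M' S R : Finset (Sym2 V)} {e : Sym2 V}

theorem IsGoodFor.mono (h : IsGoodFor w M e) (hsub : M' ⊆ M) : IsGoodFor w M' e :=
  fun S hS => h S (hS.trans (erase_subset_erase e hsub))

theorem IsChoreFor.mono (h : IsChoreFor w M e) (hsub : M' ⊆ M) : IsChoreFor w M' e :=
  fun S hS => h S (hS.trans (erase_subset_erase e hsub))

theorem IsDummyFor.mono (h : IsDummyFor w M e) (hsub : M' ⊆ M) : IsDummyFor w M' e :=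
  fun S hS => h S (hS.trans (erase_subset_erase e hsub))

theorem IsChoreFor.lt_erase (h : IsChoreFor w M e) (he : e ∈ S) (hS : S ⊆ M) :
    w S < w (S.erase e) := by
  simpa only [insert_erase he] using h (S.erase e) (erase_subset_erase e hS)

theorem IsDummyFor.insert_eq (h : IsDummyFor w M e) (hS : S ⊆ M) : w (insert e S) = w S := by
  by_cases he : e ∈ S
  · rw [insert_eq_of_mem he]
  · exact h S (subset_erase.mpr ⟨hS, he⟩)

theorem IsDummyFor.erase_eq (h : IsDummyFor w M e) (hS : S ⊆ M) : w (S.erase e) = w S := by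
  by_cases he : e ∈ S
  · rw [← h.insert_eq ((erase_subset e S).trans hS), insert_erase he]
  · rw [erase_eq_of_notMem he]

theorem value_union_eq_of_forall_isDummyFor (hS : S ⊆ M) (hR : R ⊆ M)
    (hdummy : ∀ e ∈ R, IsDummyFor w M e) : w (S ∪ R) = w S := by
  induction R using Finset.induction_on with
  | empty => rw [union_empty]
  | insert f R _ ih =>
    obtain ⟨hfdummy, hRdummy⟩ := (forall_mem_insert _ _ _).mp hdummy
    have hRM : R ⊆ M := (subset_insert f R).trans hR
    rw [union_insert, hfdummy.insert_eq (union_subset hS hRM), ih hRM hRdummy]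

theorem antitoneOn_of_forall_isChoreFor_or_isDummyFor
    (h : ∀ e ∈ M, IsChoreFor w M e ∨ IsDummyFor w M e) : AntitoneOn w (Set.Iic M) := by
  have hanti : Antitone fun S => w (S ∩ M) := by
    refine antitone_iff_forall_insert_le.mpr fun S e heS => ?_
    by_cases heM : e ∈ M
    · have hsub : S ∩ M ⊆ M.erase e :=
        subset_erase.mpr ⟨inter_subset_right, fun he => heS (mem_inter.mp he).1⟩
      rw [insert_inter_of_mem heM]
      exact (h e heM).elim (fun hc => (hc _ hsub).le) fun hd => (hd _ hsub).le
    · rw [insert_inter_of_notMem heM]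
  intro S hS T hT hST
  simpa only [inter_eq_left.mpr hS, inter_eq_left.mpr hT] using hanti hST

end Marginals

section Allocations

variable {M M' N : Finset (Sym2 V)} {X Y : V → Finset (Sym2 V)}

theorem IsAllocation.inter (hX : IsAllocation M X) (hsub : M' ⊆ M) :
    IsAllocation M' fun i => X i ∩ M' := by
  refine ⟨fun i => inter_subset_right, fun e he => ?_⟩
  simpa only [mem_inter, he, and_true] using hX.2 e (hsub he)

theorem IsAllocation.union (hX : IsAllocation M X) (hY : IsAllocation N Y)
    (hdisj : Disjoint M N) : IsAllocation (M ∪ N) fun i => X i ∪ Y i := by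
  refine ⟨fun i => union_subset_union (hX.1 i) (hY.1 i), fun e he => ?_⟩
  rcases mem_union.mp he with heM | heN
  · have heY : ∀ i, e ∉ Y i := fun i hi => disjoint_left.mp hdisj heM (hY.1 i hi)
    simpa only [mem_union, heY, or_false] using hX.2 e heM
  · have heX : ∀ i, e ∉ X i := fun i hi => disjoint_left.mp hdisj (hX.1 i hi) heN
    simpa only [mem_union, heX, false_or] using hY.2 e heN

theorem IsAllocation.union_of_sdiff (hX : IsAllocation M' X) (hY : IsAllocation (M \ M') Y)
    (hsub : M' ⊆ M) : IsAllocation M fun i => X i ∪ Y i := by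
  simpa only [union_sdiff_of_subset hsub] using hX.union hY disjoint_sdiff

omit [DecidableEq V] in
theorem exists_isAllocation_of_forall_exists {P : V → Sym2 V → Prop}
    (h : ∀ e ∈ N, ∃ i, P i e) : ∃ Y, IsAllocation N Y ∧ ∀ i, ∀ e ∈ Y i, P i e := by
  classical
  choose f hf using h
  refine ⟨fun i => {e ∈ N | ∃ he : e ∈ N, f e he = i},
    ⟨fun i => filter_subset _ _, fun e he => ⟨f e he, ?_, fun j hj => ?_⟩⟩, fun i e he => ?_⟩
  · exact mem_filter.mpr ⟨he, he, rfl⟩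
  · obtain ⟨-, -, rfl⟩ := mem_filter.mp hj
    rfl
  · obtain ⟨-, heN, rfl⟩ := mem_filter.mp he
    exact hf e heN

omit [DecidableEq V] in
theorem IsOrientation.mono (hX : IsOrientation X) (hsub : ∀ i, Y i ⊆ X i) : IsOrientation Y :=
  fun i e he => hX i e (hsub i he)

theorem IsOrientation.union (hX : IsOrientation X) (hY : IsOrientation Y) :
    IsOrientation fun i => X i ∪ Y i :=
  fun i e he => (mem_union.mp he).elim (hX i e) (hY i e)

end Allocations

variable {M M' : Finset (Sym2 V)} {v : V → Finset (Sym2 V) → ℝ} {X Y : V → Finset (Sym2 V)}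

theorem ValidInstance.mono (h : ValidInstance M v) (hsub : M' ⊆ M) : ValidInstance M' v := by
  obtain ⟨hloopless, htypes, hdummy⟩ := h
  exact ⟨fun e he => hloopless e (hsub he),
    fun i e he => (htypes i e (hsub he)).imp (·.mono hsub) (Or.imp (·.mono hsub) (·.mono hsub)),
    fun i e he hie => (hdummy i e (hsub he) hie).mono hsub⟩

theorem ValidInstance.exists_value_eq_empty (h : ValidInstance M v) (hX : IsAllocation M X)
    (hO : IsOrientation X) {i : V} {e : Sym2 V} (he : e ∈ X i) : ∃ k, v i (X k) = v i ∅ := by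
  obtain ⟨hloopless, -, hdummy⟩ := h
  have heM : e ∈ M := hX.1 i he
  obtain ⟨k, rfl⟩ := Sym2.mem_iff_exists.mp (hO i e he)
  have hik : i ≠ k := fun hik => hloopless _ heM (Sym2.mk_isDiag_iff.mpr hik)
  have hnot_incident : ∀ f ∈ X k, i ∉ f := by
    intro f hf hif
    obtain rfl : f = s(i, k) := (Sym2.mem_and_mem_iff hik).mp ⟨hif, hO k f hf⟩
    exact hik ((hX.2 _ heM).unique he hf)
  refine ⟨k, ?_⟩
  simpa only [empty_union] using value_union_eq_of_forall_isDummyFor (empty_subset M) (hX.1 k)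
    fun f hf => hdummy i f (hX.1 k hf) (hnot_incident f hf)

/-- A chores instance on the simple graph with edge set `M`: a valid instance in which every edge
is a chore or a dummy for every agent. -/
structure IsChoresInstance (M : Finset (Sym2 V)) (v : V → Finset (Sym2 V) → ℝ) : Prop where
  valid : ValidInstance M v
  chore_or_dummy : ∀ (i : V), ∀ e ∈ M, IsChoreFor (v i) M e ∨ IsDummyFor (v i) M e

namespace IsChoresInstance

theorem mono (h : IsChoresInstance M v) (hsub : M' ⊆ M) : IsChoresInstance M' v where
  valid := h.valid.mono hsub
  chore_or_dummy i e he :=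
    (h.chore_or_dummy i e (hsub he)).imp (·.mono hsub) (·.mono hsub)

theorem value_anti (h : IsChoresInstance M v) (i : V) {S T : Finset (Sym2 V)} (hST : S ⊆ T)
    (hT : T ⊆ M) : v i T ≤ v i S :=
  antitoneOn_of_forall_isChoreFor_or_isDummyFor (h.chore_or_dummy i) (hST.trans hT) hT hST

theorem condOwnStrict_iff_empty_le_erase (h : IsChoresInstance M v) (hX : IsAllocation M X)
    (hO : IsOrientation X) :
    CondOwnStrict v X ↔
      ∀ i, ∀ e ∈ X i, v i (X i) < v i ((X i).erase e) → v i ∅ ≤ v i ((X i).erase e) := by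
  constructor
  · intro hEFX i e he hlt
    obtain ⟨k, hk⟩ := h.valid.exists_value_eq_empty hX hO he
    have herase : v i ((X i).erase e) ≤ v i ∅ :=
      h.value_anti i (empty_subset _) ((erase_subset e _).trans (hX.1 i))
    have henvy : Envies v X i k := (hlt.trans_le herase).trans_eq hk.symm
    exact hk.symm.trans_le (hEFX i k henvy e he hlt)
  · intro hempty i j _ e he hlt
    exact (h.value_anti i (empty_subset _) (hX.1 j)).trans (hempty i e he hlt)

theorem condOwnStrict_inter (h : IsChoresInstance M v) (hsub : M' ⊆ M) (hX : IsAllocation M X)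
    (hO : IsOrientation X) (hEFX : CondOwnStrict v X) : CondOwnStrict v fun i => X i ∩ M' := by
  rw [(h.mono hsub).condOwnStrict_iff_empty_le_erase (hX.inter hsub)
    (hO.mono fun i => inter_subset_left)]
  intro i e he hlt
  have heX : e ∈ X i := (mem_inter.mp he).1
  have hchore : IsChoreFor (v i) M e :=
    (h.chore_or_dummy i e (hX.1 i heX)).resolve_right fun hdummy =>
      hlt.ne' (hdummy.erase_eq (inter_subset_left.trans (hX.1 i)))
  calc v i ∅ ≤ v i ((X i).erase e) :=
        (h.condOwnStrict_iff_empty_le_erase hX hO).mp hEFX i e heX (hchore.lt_erase heX (hX.1 i))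
    _ ≤ v i ((X i ∩ M').erase e) :=
        h.value_anti i (erase_subset_erase e inter_subset_left)
          ((erase_subset e _).trans (hX.1 i))

theorem condOwnStrict_union (h : IsChoresInstance M v) (hsub : M' ⊆ M) (hX : IsAllocation M' X)
    (hXO : IsOrientation X) (hEFX : CondOwnStrict v X) (hY : IsAllocation (M \ M') Y)
    (hYO : IsOrientation Y) (hdummy : ∀ i, ∀ e ∈ Y i, IsDummyFor (v i) M e) :
    CondOwnStrict v fun i => X i ∪ Y i := by
  have hXY : IsAllocation M fun i => X i ∪ Y i := hX.union_of_sdiff hY hsub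
  rw [h.condOwnStrict_iff_empty_le_erase hXY (hXO.union hYO)]
  intro i e he hlt
  have hYM : Y i ⊆ M := (hY.1 i).trans sdiff_subset
  have hvalue {S : Finset (Sym2 V)} (hS : S ⊆ X i) : v i (S ∪ Y i) = v i S :=
    value_union_eq_of_forall_isDummyFor ((hS.trans (hX.1 i)).trans hsub) hYM (hdummy i)
  have heY : e ∉ Y i := fun heY => hlt.ne' ((hdummy i e heY).erase_eq (hXY.1 i))
  have heX : e ∈ X i := (mem_union.mp he).resolve_right heY
  rw [erase_union_distrib, erase_eq_of_notMem heY, hvalue (erase_subset e _)] at hlt ⊢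
  rw [hvalue Subset.rfl] at hlt
  exact ((h.mono hsub).condOwnStrict_iff_empty_le_erase hX hXO).mp hEFX i e heX hlt

end IsChoresInstance

theorem stmt18_general (h : IsChoresInstance M v) (hsub : M' ⊆ M)
    (hdummy : ∀ e ∈ M, e ∉ M' → ∃ i ∈ e, IsDummyFor (v i) M e) :
    (∃ X : V → Finset (Sym2 V),
        IsAllocation M X ∧ IsOrientation X ∧ CondOwnStrict v X) ↔
    (∃ X : V → Finset (Sym2 V),
        IsAllocation M' X ∧ IsOrientation X ∧ CondOwnStrict v X) := by
  constructor
  · rintro ⟨X, hX, hO, hEFX⟩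
    exact ⟨fun i => X i ∩ M', hX.inter hsub, hO.mono fun i => inter_subset_left,
      h.condOwnStrict_inter hsub hX hO hEFX⟩
  · rintro ⟨X, hX, hXO, hEFX⟩
    obtain ⟨Y, hY, hYdummy⟩ :=
      exists_isAllocation_of_forall_exists (N := M \ M')
        fun e he => hdummy e (mem_sdiff.mp he).1 (mem_sdiff.mp he).2
    have hYO : IsOrientation Y := fun i e he => (hYdummy i e he).1
    exact ⟨fun i => X i ∪ Y i, hX.union_of_sdiff hY hsub, hXO.union hYO,
      h.condOwnStrict_union hsub hX hXO hEFX hY hYO fun i e he => (hYdummy i e he).2⟩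

/-- For a chores instance on `G = (N, M)`, let `M'` be obtained from
`M` by deleting every edge that is a dummy for at least one of its endpoints. Then `G`
has an EFX₋ orientation iff `G' = (N, M')` has an EFX₋ orientation. -/
theorem stmt18 {V : Type*} [DecidableEq V]
    (M M' : Finset (Sym2 V)) (v : V → Finset (Sym2 V) → ℝ)
    (hvalid : ValidInstance M v)
    (hchores : ∀ (i : V), ∀ e ∈ M, IsChoreFor (v i) M e ∨ IsDummyFor (v i) M e)
    (hM' : ∀ e : Sym2 V, e ∈ M' ↔ e ∈ M ∧ ¬ ∃ i ∈ e, IsDummyFor (v i) M e) :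
    (∃ X : V → Finset (Sym2 V),
        IsAllocation M X ∧ IsOrientation X ∧ CondOwnStrict v X) ↔
    (∃ X : V → Finset (Sym2 V),
        IsAllocation M' X ∧ IsOrientation X ∧ CondOwnStrict v X) :=
  stmt18_general ⟨hvalid, hchores⟩ (fun e he => ((hM' e).mp he).1) fun e he heM' =>
    not_not.mp fun h => heM' ((hM' e).mpr ⟨he, h⟩)
end

section
/- Consider a mixed instance on a simple graph in which every edge is a good for at least one of its two endpoint agents. Then every orientation that allocates each edge to an endpoint agent for whom it is a good is an EFX^+_0 allocation; in particular, an EFX^+_0 allocation exists for such instances. -/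
open Finset

variable {V : Type*} [DecidableEq V]

/-!
In a graph, two distinct agents `i` and `j` share at most one edge. So if `j` holds an edge that
matters to `i`, it is the only edge incident to `i` in `j`'s bundle, and what is left after its
removal is worth `v i ∅` to `i`. This is at most `v i (X i)`, since `i` holds only goods. For the
same reason the condition on the own bundle is vacuous: removing a good always loses value.
-/

theorem apply_le_apply_of_forall_le_insert {α β : Type*} [DecidableEq α] [Preorder β]
    {w : Finset α → β} {S T : Finset α} (hTS : T ⊆ S)
    (h : ∀ e ∈ S \ T, ∀ R ⊆ S.erase e, w R ≤ w (insert e R)) : w T ≤ w S := by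
  induction S using Finset.strongInduction with
  | H S ih =>
    obtain rfl | hne := eq_or_ne T S
    · exact le_rfl
    obtain ⟨e, heS, heT⟩ := exists_of_ssubset (hTS.ssubset_of_ne hne)
    have hT_le : w T ≤ w (S.erase e) :=
      ih _ (erase_ssubset heS) (subset_erase.2 ⟨hTS, heT⟩) fun f hf R hR =>
        h f (sdiff_subset_sdiff (erase_subset e S) Subset.rfl hf) R
          (hR.trans (erase_subset_erase f (erase_subset e S)))
    have he_le : w (S.erase e) ≤ w S := by
      simpa only [insert_erase heS] using h e (mem_sdiff.2 ⟨heS, heT⟩) _ Subset.rfl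
    exact hT_le.trans he_le

section Valuation

variable {M S T : Finset (Sym2 V)} {w : Finset (Sym2 V) → ℝ} {e : Sym2 V}

theorem IsGoodFor.apply_erase_lt (h : IsGoodFor w M e) (hSM : S ⊆ M) (he : e ∈ S) :
    w (S.erase e) < w S := by
  simpa only [insert_erase he] using h _ (erase_subset_erase e hSM)

theorem IsDummyFor.apply_erase_eq (h : IsDummyFor w M e) (hSM : S ⊆ M) (he : e ∈ S) :
    w (S.erase e) = w S := by
  simpa only [insert_erase he] using (h _ (erase_subset_erase e hSM)).symm

theorem apply_le_apply_of_forall_isGoodFor (hTS : T ⊆ S) (hSM : S ⊆ M)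
    (h : ∀ e ∈ S \ T, IsGoodFor w M e) : w T ≤ w S :=
  apply_le_apply_of_forall_le_insert hTS fun e he R hR =>
    (h e he R (hR.trans (erase_subset_erase e hSM))).le

theorem apply_eq_apply_of_forall_isDummyFor (hTS : T ⊆ S) (hSM : S ⊆ M)
    (h : ∀ e ∈ S \ T, IsDummyFor w M e) : w T = w S := by
  have h_insert : ∀ e ∈ S \ T, ∀ R ⊆ S.erase e, w (insert e R) = w R := fun e he R hR =>
    h e he R (hR.trans (erase_subset_erase e hSM))
  apply le_antisymm
  · exact apply_le_apply_of_forall_le_insert hTS fun e he R hR => (h_insert e he R hR).ge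
  · exact apply_le_apply_of_forall_le_insert (w := OrderDual.toDual ∘ w) hTS
      fun e he R hR => (h_insert e he R hR).le

end Valuation

section EFX

variable {M : Finset (Sym2 V)} {v : V → Finset (Sym2 V) → ℝ} {X : V → Finset (Sym2 V)}

theorem IsOrientation.apply_erase_eq_apply_empty {w : Finset (Sym2 V) → ℝ} {i j : V} {e : Sym2 V}
    (hor : IsOrientation X) (hXM : X j ⊆ M) (hdummy : ∀ f ∈ M, i ∉ f → IsDummyFor w M f)
    (hij : i ≠ j) (he : e ∈ X j) (hie : i ∈ e) : w ((X j).erase e) = w ∅ := by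
  have hrest : ∀ f ∈ (X j).erase e, i ∉ f := fun f hf hif =>
    ne_of_mem_erase hf (Sym2.eq_of_ne_mem hij hif (hor j f (mem_of_mem_erase hf)) hie (hor j e he))
  have hsub : (X j).erase e ⊆ M := (erase_subset e _).trans hXM
  refine (apply_eq_apply_of_forall_isDummyFor (empty_subset _) hsub fun f hf => ?_).symm
  have hf' : f ∈ (X j).erase e := (mem_sdiff.1 hf).1
  exact hdummy f (hsub hf') (hrest f hf')

theorem IsOrientation.condEnviedStrict (hor : IsOrientation X) (hXM : ∀ i, X i ⊆ M)
    (hdummy : ∀ i, ∀ e ∈ M, i ∉ e → IsDummyFor (v i) M e) (hempty : ∀ i, v i ∅ ≤ v i (X i)) :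
    CondEnviedStrict v X := by
  intro i j henvy e he hlt
  have hij : i ≠ j := by
    rintro rfl
    exact lt_irrefl _ henvy
  have hie : i ∈ e := by
    by_contra hie
    exact hlt.ne ((hdummy i e (hXM j he) hie).apply_erase_eq (hXM j) he)
  exact (hor.apply_erase_eq_apply_empty (hXM j) (hdummy i) hij he hie).trans_le (hempty i)

theorem condOwnWeak_of_forall_isGoodFor (hXM : ∀ i, X i ⊆ M)
    (hgood : ∀ i, ∀ e ∈ X i, IsGoodFor (v i) M e) : CondOwnWeak v X :=
  fun i _ _ e he hle => absurd hle ((hgood i e he).apply_erase_lt (hXM i) he).not_ge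

theorem condEnviedStrict_and_condOwnWeak_of_forall_isGoodFor (hXM : ∀ i, X i ⊆ M)
    (hdummy : ∀ i, ∀ e ∈ M, i ∉ e → IsDummyFor (v i) M e)
    (hX : ∀ i, ∀ e ∈ X i, i ∈ e ∧ IsGoodFor (v i) M e) :
    CondEnviedStrict v X ∧ CondOwnWeak v X := by
  have hor : IsOrientation X := fun i e he => (hX i e he).1
  have hgood : ∀ i, ∀ e ∈ X i, IsGoodFor (v i) M e := fun i e he => (hX i e he).2
  have hempty : ∀ i, v i ∅ ≤ v i (X i) := fun i =>
    apply_le_apply_of_forall_isGoodFor (empty_subset _) (hXM i) fun e he =>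
      hgood i e (mem_sdiff.1 he).1
  exact ⟨hor.condEnviedStrict hXM hdummy hempty, condOwnWeak_of_forall_isGoodFor hXM hgood⟩

end EFX

theorem isAllocation_filter_eq (M : Finset (Sym2 V)) (f : Sym2 V → V) :
    IsAllocation M fun i => {e ∈ M | f e = i} :=
  ⟨fun _ => filter_subset _ M, fun e he =>
    ⟨f e, mem_filter.2 ⟨he, rfl⟩, fun _ hi => (mem_filter.1 hi).2.symm⟩⟩

theorem exists_isAllocation_forall_mem {W : Type*} {M : Finset (Sym2 W)} {P : W → Sym2 W → Prop}
    (h : ∀ e ∈ M, ∃ i, P i e) : ∃ X, IsAllocation M X ∧ ∀ i, ∀ e ∈ X i, P i e := by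
  classical
  have htotal : ∀ e, ∃ i, e ∈ M → P i e := fun e => by
    by_cases he : e ∈ M
    · exact (h e he).imp fun _ hi _ => hi
    · exact ⟨e.out.1, fun he' => absurd he' he⟩
  choose f hf using htotal
  refine ⟨_, isAllocation_filter_eq M f, fun i e he => ?_⟩
  obtain ⟨heM, rfl⟩ := mem_filter.1 he
  exact hf e heM

theorem stmt19_general {M : Finset (Sym2 V)} {v : V → Finset (Sym2 V) → ℝ}
    (hdummy : ∀ i, ∀ e ∈ M, i ∉ e → IsDummyFor (v i) M e)
    (hgood : ∀ e ∈ M, ∃ i ∈ e, IsGoodFor (v i) M e) :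
    (∀ X : V → Finset (Sym2 V),
        (∀ i, X i ⊆ M) → (∀ i, ∀ e ∈ X i, i ∈ e ∧ IsGoodFor (v i) M e) →
          CondEnviedStrict v X ∧ CondOwnWeak v X) ∧
    (∃ X : V → Finset (Sym2 V),
        IsAllocation M X ∧ (∀ i, ∀ e ∈ X i, i ∈ e ∧ IsGoodFor (v i) M e) ∧
          CondEnviedStrict v X ∧ CondOwnWeak v X) := by
  have hefx := fun X hXM hX =>
    condEnviedStrict_and_condOwnWeak_of_forall_isGoodFor (X := X) hXM hdummy hX
  obtain ⟨X, hall, hX⟩ := exists_isAllocation_forall_mem hgood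
  exact ⟨hefx, X, hall, hX, hefx X hall.1 hX⟩

/-- In a mixed instance where every edge is a good for at least one
of its endpoint agents, every orientation allocating each edge to an endpoint for whom
it is a good is EFX⁺₀; in particular an EFX⁺₀ allocation exists. -/
theorem stmt19 {V : Type*} [DecidableEq V]
    (M : Finset (Sym2 V)) (v : V → Finset (Sym2 V) → ℝ)
    (hvalid : ValidInstance M v)
    (hgood : ∀ e ∈ M, ∃ i ∈ e, IsGoodFor (v i) M e) :
    (∀ X : V → Finset (Sym2 V),
        IsAllocation M X → (∀ i, ∀ e ∈ X i, i ∈ e ∧ IsGoodFor (v i) M e) →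
          CondEnviedStrict v X ∧ CondOwnWeak v X) ∧
    (∃ X : V → Finset (Sym2 V),
        IsAllocation M X ∧ (∀ i, ∀ e ∈ X i, i ∈ e ∧ IsGoodFor (v i) M e) ∧
          CondEnviedStrict v X ∧ CondOwnWeak v X) :=
  have ⟨hefx, hexists⟩ := stmt19_general hvalid.2.2 hgood
  ⟨fun X hall => hefx X hall.1, hexists⟩
end
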